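/- arXiv:1008.2228 — 2 statements merged into one kernel-verified Lean document; each statement's English description precedes it below -/
import Mathlib

section
/- For every 1 ≤ i ≤ d, the adjacency matrices of the wreath product satisfy (A_i)² = k_i (A_0 + A_1 + ⋯ + A_{i−1}) + k_i·((n_i − 2)/(n_i − 1))·A_i; equivalently, (A_i)² = k_i (A_0 + A_1 + ⋯ + A_{i−1}) + (k_i − (k_0 + k_1 + ⋯ + k_{i−1})) A_i. -/
open Finset Matrix

/-- Vertex set of the wreath product `K_{n 0} ≀ K_{n 1} ≀ ⋯ ≀ K_{n (d-1)}`
(paper indices `n_1, …, n_d` correspond to `n 0, …, n (d-1)`). -/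
abbrev Vx (d : ℕ) (n : ℕ → ℕ) : Type := (i : Fin d) → Fin (n i)

/-- `delta x y = 0` if `x = y`; otherwise `delta x y` is the largest (1-based)
index at which `x` and `y` differ. -/
def delta {d : ℕ} {n : ℕ → ℕ} (x y : Vx d n) : ℕ :=
  (Finset.univ.filter fun i => x i ≠ y i).sup fun i => (i : ℕ) + 1

/-- The `i`-th adjacency matrix of the wreath product: `(A i) x y = 1` iff `delta x y = i`. -/
noncomputable def A (d : ℕ) (n : ℕ → ℕ) (i : ℕ) : Matrix (Vx d n) (Vx d n) ℂ :=
  Matrix.of fun x y => if delta x y = i then 1 else 0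

/-- The valencies: `k 0 = 1` and, for `1 ≤ i`, `k i = n_1 ⋯ n_{i-1} (n_i - 1)`,
i.e. `k i = n 0 ⋯ n (i-2) * (n (i-1) - 1)`. -/
def k (n : ℕ → ℕ) (i : ℕ) : ℕ :=
  if i = 0 then 1 else (∏ j ∈ Finset.range (i - 1), n j) * (n (i - 1) - 1)

/-- The dual idempotent `E_i*` with respect to the base point `x₀`: the diagonal
0-1 matrix with `(E_i*)_{yy} = 1` iff `delta x₀ y = i`. -/
noncomputable def Es {d : ℕ} {n : ℕ → ℕ} (x₀ : Vx d n) (i : ℕ) :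
    Matrix (Vx d n) (Vx d n) ℂ :=
  Matrix.of fun y z => if y = z ∧ delta x₀ y = i then 1 else 0

/-- The all-ones matrix `J`. -/
noncomputable def Jm (d : ℕ) (n : ℕ → ℕ) : Matrix (Vx d n) (Vx d n) ℂ :=
  Matrix.of fun _ _ => 1

/-- The matrices `G i j`. -/
noncomputable def G {d : ℕ} {n : ℕ → ℕ} (x₀ : Vx d n) (i j : ℕ) :
    Matrix (Vx d n) (Vx d n) ℂ :=
  if i < j then ((k n j : ℂ))⁻¹ • (Es x₀ i * A d n j * Es x₀ j)
  else if j < i then ((k n j : ℂ))⁻¹ • (Es x₀ i * A d n i * Es x₀ j)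
  else ((k n i : ℂ))⁻¹ • (Es x₀ i * Jm d n * Es x₀ i)

/-- The span `U` of the matrices `G i j`, `i, j ∈ [d]`. -/
noncomputable def Uspan {d : ℕ} {n : ℕ → ℕ} (x₀ : Vx d n) :
    Submodule ℂ (Matrix (Vx d n) (Vx d n) ℂ) :=
  Submodule.span ℂ (Set.range fun p : Fin (d + 1) × Fin (d + 1) => G x₀ p.1 p.2)

/-- The Terwilliger algebra of the wreath product with respect to `x₀`. -/
noncomputable def Ter {d : ℕ} {n : ℕ → ℕ} (x₀ : Vx d n) :
    Subalgebra ℂ (Matrix (Vx d n) (Vx d n) ℂ) :=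
  Algebra.adjoin ℂ
    ((Set.range fun i : Fin (d + 1) => A d n i) ∪ (Set.range fun i : Fin (d + 1) => Es x₀ i))

/-- The matrices `F i h`, for `1 ≤ i ≤ d` and `0 ≤ h ≤ i - 1`. -/
noncomputable def F {d : ℕ} {n : ℕ → ℕ} (x₀ : Vx d n) (i h : ℕ) :
    Matrix (Vx d n) (Vx d n) ℂ :=
  if h < i - 1 then
    (∑ j ∈ Finset.range (h + 1), (k n j : ℂ))⁻¹ •
        (∑ j ∈ Finset.range (h + 1), Es x₀ i * A d n j * Es x₀ i)
      - (∑ j ∈ Finset.range (h + 2), (k n j : ℂ))⁻¹ •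
          (∑ j ∈ Finset.range (h + 2), Es x₀ i * A d n j * Es x₀ i)
  else
    (∑ j ∈ Finset.range i, (k n j : ℂ))⁻¹ •
        (∑ j ∈ Finset.range i, Es x₀ i * A d n j * Es x₀ i)
      - G x₀ i i

theorem delta_le_iff {d : ℕ} {n : ℕ → ℕ} (x y : Vx d n) (l : ℕ) :
    delta x y ≤ l ↔ ∀ i : Fin d, l ≤ (i : ℕ) → x i = y i := by
  unfold delta
  rw [Finset.sup_le_iff]
  constructor
  · intro h i hl
    by_contra hne
    have := h i (by simpa using hne)
    omega
  · intro h i hi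
    by_contra hlt
    simp only [Finset.mem_filter, Finset.mem_univ, true_and] at hi
    exact hi (h i (by omega))

theorem card_ball {d : ℕ} {n : ℕ → ℕ} (y : Vx d n) (l : ℕ) (hl : l ≤ d) :
    (Finset.univ.filter fun z : Vx d n => delta z y ≤ l).card = ∏ j ∈ Finset.range l, n j := by
  have h : (Finset.univ.filter fun z : Vx d n => delta z y ≤ l)
      = Fintype.piFinset (fun i : Fin d => if (i : ℕ) < l then Finset.univ else {y i}) := by
    ext z
    simp only [Finset.mem_filter, Finset.mem_univ, true_and, Fintype.mem_piFinset, delta_le_iff]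
    refine forall_congr' fun i => ?_
    split_ifs with hi
    · simp [hi]
    · simp [not_lt.mp hi]
  rw [h, Fintype.card_piFinset]
  have h2 : ∀ i : Fin d, (if (i : ℕ) < l then (Finset.univ : Finset (Fin (n i))) else {y i}).card
      = (fun j : ℕ => if j < l then n j else 1) i := by
    intro i
    by_cases hi : (i : ℕ) < l <;> simp [hi]
  rw [Finset.prod_congr rfl fun i _ => h2 i, Fin.prod_univ_eq_prod_range (fun j : ℕ => if j < l then n j else 1) d,
    ← Finset.prod_filter]
  congr 1
  ext j
  simp only [Finset.mem_filter, Finset.mem_range]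
  omega

/-- Ball matrix. -/
noncomputable def Bm (d : ℕ) (n : ℕ → ℕ) (l : ℕ) : Matrix (Vx d n) (Vx d n) ℂ :=
  Matrix.of fun x y => if delta x y ≤ l then 1 else 0

theorem delta_symm {d : ℕ} {n : ℕ → ℕ} (x y : Vx d n) : delta x y = delta y x := by
  unfold delta
  simp only [ne_comm]

theorem Bm_mul {d : ℕ} {n : ℕ → ℕ} (m l : ℕ) (hlm : l ≤ m) (hl : l ≤ d) :
    Bm d n m * Bm d n l = ((∏ j ∈ Finset.range l, n j : ℕ) : ℂ) • Bm d n m := by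
  ext x y
  rw [Matrix.mul_apply, Matrix.smul_apply, ← card_ball y l hl]
  have : ∀ z : Vx d n, Bm d n m x z * Bm d n l z y
      = (if delta z y ≤ l then 1 else 0) * Bm d n m x y := by
    intro z
    by_cases hz : delta z y ≤ l
    · have : delta x z ≤ m ↔ delta x y ≤ m := by
        rw [delta_le_iff] at hz
        simp only [delta_le_iff]
        refine forall_congr' fun i => imp_congr_right fun hi => ?_
        rw [hz i (by omega)]
      simp [Bm, hz, this]
    · simp [Bm, hz]
  rw [Finset.sum_congr rfl fun z _ => this z, ← Finset.sum_mul, Finset.sum_boole, smul_eq_mul]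

theorem Bm_transpose {d : ℕ} {n : ℕ → ℕ} (m : ℕ) : (Bm d n m)ᵀ = Bm d n m := by
  ext x y
  simp [Bm, delta_symm x y]

theorem Bm_mul' {d : ℕ} {n : ℕ → ℕ} (m l : ℕ) (hlm : l ≤ m) (hl : l ≤ d) :
    Bm d n l * Bm d n m = ((∏ j ∈ Finset.range l, n j : ℕ) : ℂ) • Bm d n m := by
  have := congrArg Matrix.transpose (Bm_mul (n := n) m l hlm hl)
  rwa [Matrix.transpose_mul, Matrix.transpose_smul, Bm_transpose, Bm_transpose] at this

theorem sum_A {d : ℕ} {n : ℕ → ℕ} (m : ℕ) :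
    ∑ j ∈ Finset.range (m + 1), A d n j = Bm d n m := by
  ext x y
  rw [Matrix.sum_apply]
  simp [A, Bm, Nat.lt_succ_iff]

theorem sum_k (n : ℕ → ℕ) (m : ℕ) (h : ∀ j < m, 1 ≤ n j) :
    ∑ j ∈ Finset.range (m + 1), (k n j : ℂ) = ((∏ j ∈ Finset.range m, n j : ℕ) : ℂ) := by
  induction m with
  | zero => simp [k]
  | succ m ih =>
    rw [Finset.sum_range_succ, ih fun j hj => h j (by omega), Finset.prod_range_succ]
    simp only [k, Nat.add_sub_cancel, Nat.succ_ne_zero, if_false]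
    push_cast [Nat.cast_sub (h m (by omega))]
    ring

/-- `(A i)² = k i (A 0 + ⋯ + A (i-1)) + k i ((n_i - 2)/(n_i - 1)) A i
= k i (A 0 + ⋯ + A (i-1)) + (k i - (k 0 + ⋯ + k (i-1))) A i` for `1 ≤ i ≤ d`.
(Here paper's `n_i` is `n (i-1)`.) -/
theorem stmt2 (d : ℕ) (hd : 1 ≤ d) (n : ℕ → ℕ) (hn : ∀ i < d, 2 ≤ n i)
    (i : ℕ) (h1 : 1 ≤ i) (hi : i ≤ d) :
    A d n i * A d n i
        = (k n i : ℂ) • (∑ j ∈ Finset.range i, A d n j)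
          + ((k n i : ℂ) * (((n (i - 1) : ℂ) - 2) / ((n (i - 1) : ℂ) - 1))) • A d n i ∧
    A d n i * A d n i
        = (k n i : ℂ) • (∑ j ∈ Finset.range i, A d n j)
          + ((k n i : ℂ) - ∑ j ∈ Finset.range i, (k n j : ℂ)) • A d n i := by
  obtain ⟨m, rfl⟩ : ∃ m, i = m + 1 := ⟨i - 1, by omega⟩
  have hnm := hn m (by omega)
  have hA : A d n (m + 1) = Bm d n (m + 1) - Bm d n m := by
    rw [← sum_A, ← sum_A, Finset.sum_range_succ _ (m + 1)]
    abel
  have hk : (k n (m + 1) : ℂ) = ((∏ j ∈ Finset.range m, n j : ℕ) : ℂ) * ((n m : ℂ) - 1) := by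
    simp only [k, Nat.add_sub_cancel, Nat.succ_ne_zero, if_false]
    push_cast [Nat.cast_sub (show 1 ≤ n m by omega)]
    ring
  have hne : (n m : ℂ) - 1 ≠ 0 := by
    rw [sub_ne_zero]
    exact_mod_cast (show n m ≠ 1 by omega)
  have key : A d n (m + 1) * A d n (m + 1)
      = (k n (m + 1) : ℂ) • (∑ j ∈ Finset.range (m + 1), A d n j)
        + ((k n (m + 1) : ℂ) - ∑ j ∈ Finset.range (m + 1), (k n j : ℂ)) • A d n (m + 1) := by
    rw [sum_A, sum_k n m fun j hj => by have := hn j (by omega); omega, hA, hk]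
    rw [sub_mul, mul_sub, mul_sub, Bm_mul _ _ le_rfl hi, Bm_mul _ _ (Nat.le_succ m) (by omega),
      Bm_mul' _ _ (Nat.le_succ m) (by omega), Bm_mul _ _ le_rfl (by omega),
      Finset.prod_range_succ]
    push_cast
    module
  refine ⟨?_, key⟩
  rw [key, sum_k n m fun j hj => by have := hn j (by omega); omega, hk, Nat.add_sub_cancel]
  congr 2
  field_simp
  ring
end

section
/- For all h, i, j ∈ {0,1,…,d}: if h < i, then A_h G_{ij} = (E_i* A_h E_i*) G_{ij}; and if h < j, then G_{ij} A_h = G_{ij} (E_j* A_h E_j*). -/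
open Finset Matrix

theorem delta_tri {d : ℕ} {n : ℕ → ℕ} (x y z : Vx d n) :
    delta x z ≤ max (delta x y) (delta y z) := by
  unfold delta
  apply Finset.sup_le
  intro b hb
  have hb' : x b ≠ z b := by simpa using hb
  by_cases h : x b = y b
  · refine le_max_of_le_right ?_
    exact Finset.le_sup (f := fun i : Fin d => (i : ℕ) + 1) (by simp; rwa [← h])
  · refine le_max_of_le_left ?_
    exact Finset.le_sup (f := fun i : Fin d => (i : ℕ) + 1) (by simpa using h)

theorem Es_diag {d : ℕ} {n : ℕ → ℕ} (x₀ : Vx d n) (i : ℕ) :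
    Es x₀ i = Matrix.diagonal fun y => if delta x₀ y = i then 1 else 0 := by
  ext y z
  by_cases h : y = z <;> simp [Es, Matrix.diagonal_apply, h]

theorem Es_idem {d : ℕ} {n : ℕ → ℕ} (x₀ : Vx d n) (i : ℕ) :
    Es x₀ i * Es x₀ i = Es x₀ i := by
  simp [Es_diag, Matrix.diagonal_mul_diagonal]

theorem Es_G {d : ℕ} {n : ℕ → ℕ} (x₀ : Vx d n) (i j : ℕ) :
    Es x₀ i * G x₀ i j = G x₀ i j := by
  unfold G
  split_ifs <;> simp only [Matrix.mul_smul, ← Matrix.mul_assoc, Es_idem]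

theorem G_Es {d : ℕ} {n : ℕ → ℕ} (x₀ : Vx d n) (i j : ℕ) :
    G x₀ i j * Es x₀ j = G x₀ i j := by
  unfold G
  split_ifs with h1 h2
  · simp only [Matrix.smul_mul, Matrix.mul_assoc, Es_idem]
  · simp only [Matrix.smul_mul, Matrix.mul_assoc, Es_idem]
  · obtain rfl : i = j := by omega
    simp only [Matrix.smul_mul, Matrix.mul_assoc, Es_idem]

theorem delta_iff {d : ℕ} {n : ℕ → ℕ} (x₀ x y : Vx d n) (i : ℕ) (h : delta x y < i) :
    delta x₀ x = i ↔ delta x₀ y = i := by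
  have h1 := delta_tri x₀ x y
  have h2 := delta_tri x₀ y x
  rw [delta_symm y x] at h2
  omega

theorem Es_comm {d : ℕ} {n : ℕ → ℕ} (x₀ : Vx d n) (h i : ℕ) (hi : h < i) :
    Es x₀ i * A d n h = A d n h * Es x₀ i := by
  ext x y
  rw [Es_diag, Matrix.diagonal_mul, Matrix.mul_diagonal]
  by_cases hx : delta x y = h
  · simp [A, hx, delta_iff x₀ x y i (by omega)]
  · simp [A, hx]

/-- if `h < i` then `A h * G i j = (E_i* A_h E_i*) G i j`; and if `h < j`
then `G i j * A h = G i j (E_j* A_h E_j*)`. -/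
theorem stmt16 (d : ℕ) (hd : 1 ≤ d) (n : ℕ → ℕ) (hn : ∀ i < d, 2 ≤ n i)
    (x₀ : Vx d n) (h i j : ℕ) (hi : i ≤ d) (hj : j ≤ d) (hhd : h ≤ d) :
    (h < i → A d n h * G x₀ i j = Es x₀ i * A d n h * Es x₀ i * G x₀ i j) ∧
    (h < j → G x₀ i j * A d n h = G x₀ i j * (Es x₀ j * A d n h * Es x₀ j)) := by
  refine ⟨fun hh => ?_, fun hh => ?_⟩
  · rw [Es_comm x₀ h i hh, Matrix.mul_assoc (A d n h), Es_idem, Matrix.mul_assoc, Es_G]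
  · rw [Matrix.mul_assoc (Es x₀ j), ← Es_comm x₀ h j hh, ← Matrix.mul_assoc (Es x₀ j), Es_idem,
      ← Matrix.mul_assoc, G_Es]
end
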